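/- Fix an integer b ≥ 2 and γ ∈ (0,1), and let φ be a real analytic ℤ-periodic function. Let t ∈ ℤ₊, Δ₁ > 0, x₀ ∈ [0,1), and a, h, h' ∈ Λ^t be such that for every z ∈ I_a and all words i, j ∈ Λ^# with h a prefix of i and h' a prefix of j: |S'(z,i)| > Δ₁, |S'(z,j)| > Δ₁, and |S'(z,i) − S'(z,j)| > Δ₁. Then there exists a constant L₁ > 0 such that for all positive integers n, k, i and every word q ∈ Λ^#: if ξ is a finitely supported probability measure on Λ^# whose support is contained in a single element of the partition L_i^{Λ#}, and every w in the support of ξ satisfies |w| = n̂ and I_w ⊆ I_a, then H(ξ, L_{i+k}^{Λ#}) ≤ H(A_{h'q}(ξ), L_{i+k+n}) + H(A_{hq}(ξ), L_{i+k+n}) + L₁. -/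

import Mathlib

/-!
Write `g = γ ^ n̂`. The cocycle identity `S(x₀, wu) = S(x₀, w) + g S(w(x₀), u)` (`Sfin_append`)
shows that two words `w, w'` for which both `S(x₀, whq)` and `S(x₀, wh'q)` agree up to
`b^{-(i+k+n)}` satisfy
`g |D(w(x₀)) - D(w'(x₀))| ≤ 2 b^{-(i+k+n)}`, where `D(y) = S(y, hq) - S(y, h'q)`. By
transversality `|D'| > Δ₁` on `I_a`, and `b^{-n} < g / γ`, so `w(x₀)` and `w'(x₀)` are within
`O(b^{-(i+k)})`. The functions `S(·, u)` are Lipschitz uniformly in `u` (`Sfin_lip`), hence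
`S(w(x₀), h)`, `S(w(x₀), h')` and `S(x₀, w) / g` also vary by only `O(b^{-(i+k)})`
(`joint_close`). Therefore each joint cell of the two projections meets a bounded number `N` of
cells of `L_{i+k}^{Λ#}`.

The entropy bound is then `H(C) ≤ H(X) + H(Y) + log N` for finitely valued random variables such
that `C` takes at most `N` values once `(X, Y)` is known (`entropy_le_of_count`). It is proved in
one step from `log r ≤ r - 1` applied to `r = P(X) P(Y) / (N P(C))`.
-/

open MeasureTheory Set Filter
open scoped ENNReal NNReal Topology

namespace Skew

noncomputable section

variable (b : ℕ) (γ : ℝ) (φ : ℝ → ℝ)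

/-- `j₁ + j₂ b + ⋯ + jₙ b^{n-1}`, the integer part determined by the first `n`
digits of the sequence `j`. -/
def sval (j : ℕ → Fin b) (n : ℕ) : ℕ := ∑ k ∈ Finset.range n, (j k).val * b ^ k

/-- `S(x,j) = Σ_{n≥1} γ^{n-1} φ((x + j₁ + j₂ b + ⋯ + jₙ b^{n-1})/bⁿ)` for an infinite
sequence `j ∈ Σ = Λ^{ℤ₊}`. -/
def S (x : ℝ) (j : ℕ → Fin b) : ℝ :=
  ∑' n : ℕ, γ ^ n * φ ((x + sval b j (n + 1)) / (b : ℝ) ^ (n + 1))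

/-- value of a finite word: first letter has weight `b^0`. -/
def lval : List (Fin b) → ℕ
  | [] => 0
  | a :: w => a.val + b * lval w

/-- `S(x,w)` for a finite word `w ∈ Λ^#`. -/
def Sfin (x : ℝ) (w : List (Fin b)) : ℝ :=
  ∑ n ∈ Finset.range w.length, γ ^ n * φ ((x + lval b (w.take (n + 1))) / (b : ℝ) ^ (n + 1))

/-- concatenation of a finite word with an infinite sequence. -/
def cat (w : List (Fin b)) (j : ℕ → Fin b) : ℕ → Fin b :=
  fun n => if h : n < w.length then w.get ⟨n, h⟩ else j (n - w.length)

/-- `w(x) = (x + w₁ + w₂ b + ⋯ + wₙ b^{n-1})/bⁿ`. -/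
def pt (w : List (Fin b)) (x : ℝ) : ℝ := (x + lval b w) / (b : ℝ) ^ w.length

/-- the `b`-adic interval `I_w = [w(0), w(0) + b^{-|w|})`. -/
def Iword (w : List (Fin b)) : Set ℝ :=
  Ico (pt b w 0) (pt b w 0 + ((b : ℝ) ^ w.length)⁻¹)

/-- value of a word given as a function `Fin n → Fin b`. -/
def fval {n : ℕ} (w : Fin n → Fin b) : ℕ := ∑ k : Fin n, (w k).val * b ^ (k : ℕ)

/-- `w(x)` for a word given as a function `Fin n → Fin b`. -/
def fpt {n : ℕ} (w : Fin n → Fin b) (x : ℝ) : ℝ := (x + fval b w) / (b : ℝ) ^ n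

/-- `ν` is the Bernoulli product measure `ν^{ℤ₊}` of uniform measures on `Λ = Fin b`:
a probability measure giving each cylinder of length `n` measure `b^{-n}`.  (These
conditions determine the measure uniquely.) -/
def IsBernoulli (ν : Measure (ℕ → Fin b)) : Prop :=
  IsProbabilityMeasure ν ∧
    ∀ (n : ℕ) (w : Fin n → Fin b), ν {j | ∀ k : Fin n, j k = w k} = ((b : ℝ≥0∞) ^ n)⁻¹

/-- the measure `m_x`, pushforward of `ν^{ℤ₊}` under `j ↦ S(x,j)`. -/
def mMeas (ν : Measure (ℕ → Fin b)) (x : ℝ) : Measure ℝ := ν.map (S b γ φ x)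

/-- the SRB measure `ω`: pushforward of `Leb|_{[0,1)} × ν^{ℤ₊}` under `(x,j) ↦ (x, S(x,j))`. -/
def srb (ν : Measure (ℕ → Fin b)) : Measure (ℝ × ℝ) :=
  ((volume.restrict (Ico (0 : ℝ) 1)).prod ν).map fun p => (p.1, S b γ φ p.1 p.2)

/-- the attractor `F^φ_{b,γ}`, closure of `{(x, S(x,j)) : x ∈ [0,1), j ∈ Σ}`. -/
def attractor : Set (ℝ × ℝ) :=
  closure {p | ∃ x ∈ Ico (0 : ℝ) 1, ∃ j : ℕ → Fin b, p = (x, S b γ φ x j)}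

/-- condition (H). -/
def CondH : Prop :=
  ∀ i j : ℕ → Fin b, i ≠ j → ∃ x ∈ Icc (0 : ℝ) 1, S b γ φ x i ≠ S b γ φ x j

/-- condition (H*). -/
def CondHstar : Prop :=
  ∀ i j : ℕ → Fin b, ∀ x ∈ Icc (0 : ℝ) 1, S b γ φ x i = S b γ φ x j

/-- a measure is exact dimensional with dimension `β`. -/
def IsExactDim {X : Type*} [MetricSpace X] [MeasurableSpace X] (μ : Measure X) (β : ℝ) : Prop :=
  ∀ᵐ z ∂μ, Tendsto (fun r : ℝ => Real.log (μ (Metric.closedBall z r)).toReal / Real.log r)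
    (nhdsWithin 0 (Ioi 0)) (nhds β)

/-- the `b`-adic interval of level `n` with index `j`. -/
def badicI (n : ℕ) (j : ℤ) : Set ℝ := Ico ((j : ℝ) / (b : ℝ) ^ n) ((j + 1 : ℝ) / (b : ℝ) ^ n)

/-- the entropy `H(μ, L_n)` (in base-`b` logarithm). -/
def entropy (μ : Measure ℝ) (n : ℕ) : ℝ :=
  (∑' j : ℤ, Real.negMulLog (μ (badicI b n j)).toReal) / Real.log b

/-- the `b`-adic interval of level `n` containing `x`. -/
def badicAt (n : ℕ) (x : ℝ) : Set ℝ := badicI b n ⌊x * (b : ℝ) ^ n⌋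

/-- the component measure `μ_{x,n} = μ(· | L_n(x))`. -/
def component (μ : Measure ℝ) (n : ℕ) (x : ℝ) : Measure ℝ :=
  (μ (badicAt b n x))⁻¹ • μ.restrict (badicAt b n x)

/-- `μ` is `(h,δ,m)`-entropy porous from scale `n₁` to `n₂`. -/
def EntPorous (μ : Measure ℝ) (h δ : ℝ) (m n₁ n₂ : ℕ) : Prop :=
  (1 / (n₂ - n₁ + 1 : ℝ)) *
    ∑ i ∈ Finset.Icc n₁ n₂,
      (μ {x | (1 / m : ℝ) * entropy b (component b μ i x) (i + m) < h + δ}).toReal > 1 - δ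

/-- `s` and `t` lie in the same `b`-adic interval of level `n`. -/
def sameBadic (n : ℕ) (s t : ℝ) : Prop := ⌊s * (b : ℝ) ^ n⌋ = ⌊t * (b : ℝ) ^ n⌋

/-- the words `w, w'` lie in the same element of the partition `L_i^{Λ#}` (depending on
the base point `x₀` and the words `h, h' ∈ Λᵗ`). -/
def sameCell (x₀ : ℝ) (hw h'w : List (Fin b)) (i : ℕ) (w w' : List (Fin b)) : Prop :=
  w.length = w'.length ∧
  sameBadic b i (Sfin b γ φ (pt b w x₀) hw) (Sfin b γ φ (pt b w' x₀) hw) ∧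
  sameBadic b i (Sfin b γ φ (pt b w x₀) h'w) (Sfin b γ φ (pt b w' x₀) h'w) ∧
  sameBadic b (i + ⌊(w.length : ℝ) * Real.logb b (1 / γ)⌋₊)
    (Sfin b γ φ x₀ w) (Sfin b γ φ x₀ w')
open scoped Classical in
/-- the mass given by `ξ = (s,p)` to the cell of `L_i^{Λ#}` containing `w`. -/
def cellMass (x₀ : ℝ) (hw h'w : List (Fin b)) (i : ℕ)
    (s : Finset (List (Fin b))) (p : List (Fin b) → ℝ) (w : List (Fin b)) : ℝ :=
  ∑ w' ∈ s, if sameCell b γ φ x₀ hw h'w i w w' then p w' else 0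

/-- the entropy `H(ξ, L_i^{Λ#})` (base-`b` logarithm) of the finitely supported
probability measure `ξ = (s,p)` on `Λ^#` with respect to the partition `L_i^{Λ#}`. -/
def entCell (x₀ : ℝ) (hw h'w : List (Fin b)) (i : ℕ)
    (s : Finset (List (Fin b))) (p : List (Fin b) → ℝ) : ℝ :=
  ∑ w ∈ s, p w * (-Real.logb b (cellMass b γ φ x₀ hw h'w i s p w))

/-- the measure `A_u(ξ) = Σ_w ξ({w}) δ_{S(x₀, wu)}` on `ℝ`. -/
def Ameas (x₀ : ℝ) (s : Finset (List (Fin b))) (p : List (Fin b) → ℝ)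
    (u : List (Fin b)) : Measure ℝ :=
  ∑ w ∈ s, ENNReal.ofReal (p w) • Measure.dirac (Sfin b γ φ x₀ (w ++ u))

/-! ### Entropy of finitely valued functions -/

/-- The mass which the weights `p` on `s` give to the fibre of `f` over `c`. -/
def fmass {α β : Type*} [DecidableEq β] (s : Finset α) (p : α → ℝ) (f : α → β) (c : β) : ℝ :=
  ∑ w ∈ s, if f w = c then p w else 0

/-- The entropy (natural logarithm) of `f` under the weights `p` on `s`, in the form
`E[-log P(f)]`. -/
def fent {α β : Type*} [DecidableEq β] (s : Finset α) (p : α → ℝ) (f : α → β) : ℝ :=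
  ∑ w ∈ s, p w * (-Real.log (fmass s p f (f w)))

theorem fmass_nonneg {α β : Type*} [DecidableEq β] (s : Finset α) (p : α → ℝ)
    (hp : ∀ w, 0 ≤ p w) (f : α → β) (c : β) : 0 ≤ fmass s p f c :=
  Finset.sum_nonneg fun w _ => by split_ifs <;> simp [hp w]

theorem fmass_pos {α β : Type*} [DecidableEq β] (s : Finset α) (p : α → ℝ)
    (hp : ∀ w, 0 ≤ p w) (f : α → β) (w : α) (hw : w ∈ s) (h : 0 < p w) :
    0 < fmass s p f (f w) := by
  refine lt_of_lt_of_le h ?_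
  have := Finset.single_le_sum (f := fun v => if f v = f w then p v else 0)
    (fun v _ => by split_ifs <;> simp [hp v]) hw
  simpa [fmass] using this

theorem sum_fmass_mul {α β : Type*} [DecidableEq β] (s : Finset α) (p : α → ℝ) (f : α → β)
    (g : β → ℝ) : ∑ c ∈ s.image f, fmass s p f c * g c = ∑ w ∈ s, p w * g (f w) := by
  simp only [fmass, Finset.sum_mul]
  rw [Finset.sum_comm]
  refine Finset.sum_congr rfl fun w hw => ?_
  rw [Finset.sum_eq_single (f w)]
  · simp
  · intro c _ hc
    simp [hc.symm]
  · intro h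
    exact absurd (Finset.mem_image_of_mem f hw) h

theorem sum_fmass {α β : Type*} [DecidableEq β] (s : Finset α) (p : α → ℝ) (f : α → β) :
    ∑ c ∈ s.image f, fmass s p f c = ∑ w ∈ s, p w := by
  simpa using sum_fmass_mul s p f (fun _ => 1)

/-- If `C` takes at most `N` values on each joint fibre of `X` and `Y`, then
`H(C) ≤ H(X) + H(Y) + log N`. -/
theorem entropy_le_of_count {α β δ : Type*} [DecidableEq β] [DecidableEq δ]
    (s : Finset α) (p : α → ℝ) (hp : ∀ w ∈ s, 0 < p w) (hp0 : ∀ w, 0 ≤ p w)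
    (hsum : ∑ w ∈ s, p w = 1)
    (X Y : α → β) (C : α → δ) (N : ℕ) (hN : 0 < N)
    (hcount : ∀ x y, ((s.filter fun w => X w = x ∧ Y w = y).image C).card ≤ N) :
    fent s p C ≤ fent s p X + fent s p Y + Real.log N := by
  classical
  have hN' : (0 : ℝ) < N := by exact_mod_cast hN
  set mX := fmass s p X
  set mY := fmass s p Y
  set mC := fmass s p C
  have key : ∑ w ∈ s, p w * (mX (X w) * mY (Y w) / mC (C w)) ≤ N := by
    let T : α → (β × β) × δ := fun w => ((X w, Y w), C w)
    have e1 := sum_fmass_mul s p T (fun τ => mX τ.1.1 * mY τ.1.2 / mC τ.2)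
    have e2 : ∑ w ∈ s, p w * (mX (X w) * mY (Y w) / mC (C w)) =
        ∑ τ ∈ s.image T, fmass s p T τ * (mX τ.1.1 * mY τ.1.2 / mC τ.2) := e1.symm
    have hmX : ∀ c, 0 ≤ mX c := fun c => fmass_nonneg s p hp0 X c
    have hmY : ∀ c, 0 ≤ mY c := fun c => fmass_nonneg s p hp0 Y c
    have e3 : ∀ τ ∈ s.image T, fmass s p T τ * (mX τ.1.1 * mY τ.1.2 / mC τ.2) ≤
        mX τ.1.1 * mY τ.1.2 := by
      intro τ hτ
      obtain ⟨w, hw, rfl⟩ := Finset.mem_image.1 hτ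
      have h1 : 0 < mC (C w) := fmass_pos s p hp0 C w hw (hp w hw)
      have h2 : fmass s p T (T w) ≤ mC (C w) := by
        refine Finset.sum_le_sum fun v _ => ?_
        by_cases h : T v = T w
        · have : C v = C w := congrArg Prod.snd h
          simp [h, this]
        · simp only [h, if_false]
          split_ifs <;> simp [hp0 v]
      have h3 : 0 ≤ mX (X w) * mY (Y w) := mul_nonneg (hmX _) (hmY _)
      calc fmass s p T (T w) * (mX (X w) * mY (Y w) / mC (C w))
          ≤ mC (C w) * (mX (X w) * mY (Y w) / mC (C w)) := by gcongr
        _ = mX (X w) * mY (Y w) := by field_simp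
    have hmaps : ∀ τ ∈ s.image T, τ.1 ∈ s.image X ×ˢ s.image Y := by
      intro τ hτ
      obtain ⟨w, hw, rfl⟩ := Finset.mem_image.1 hτ
      exact Finset.mem_product.2 ⟨Finset.mem_image_of_mem _ hw, Finset.mem_image_of_mem _ hw⟩
    calc _ = _ := e2
      _ ≤ ∑ τ ∈ s.image T, mX τ.1.1 * mY τ.1.2 := Finset.sum_le_sum e3
      _ = ∑ xy ∈ s.image X ×ˢ s.image Y, ∑ τ ∈ (s.image T).filter (fun τ => τ.1 = xy),
            mX τ.1.1 * mY τ.1.2 := (Finset.sum_fiberwise_of_maps_to hmaps _).symm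
      _ ≤ ∑ xy ∈ s.image X ×ˢ s.image Y, (N : ℝ) * (mX xy.1 * mY xy.2) := by
        refine Finset.sum_le_sum fun xy _ => ?_
        rw [Finset.sum_congr rfl (g := fun _ => mX xy.1 * mY xy.2)
          (fun τ hτ => by rw [(Finset.mem_filter.1 hτ).2])]
        rw [Finset.sum_const, nsmul_eq_mul]
        have hc : ((s.image T).filter (fun τ => τ.1 = xy)).card ≤ N := by
          refine le_trans ?_ (hcount xy.1 xy.2)
          refine Finset.card_le_card_of_injOn Prod.snd ?_ ?_
          · intro τ hτ
            obtain ⟨h1, h2⟩ := Finset.mem_filter.1 hτ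
            obtain ⟨w, hw, rfl⟩ := Finset.mem_image.1 h1
            refine Finset.mem_coe.2 (Finset.mem_image.2 ⟨w, Finset.mem_filter.2 ⟨hw, ?_⟩, rfl⟩)
            exact ⟨congrArg Prod.fst h2, congrArg Prod.snd h2⟩
          · intro τ hτ τ' hτ' h
            exact Prod.ext ((Finset.mem_filter.1 hτ).2.trans (Finset.mem_filter.1 hτ').2.symm) h
        have := hmX xy.1
        have := hmY xy.2
        gcongr
      _ = N * ((∑ x ∈ s.image X, mX x) * ∑ y ∈ s.image Y, mY y) := by
        rw [← Finset.mul_sum, Finset.sum_mul_sum, Finset.sum_product]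
      _ = N := by
        rw [sum_fmass, sum_fmass, hsum]; ring
  have hterm : ∀ w ∈ s, p w * (-Real.log (mC (C w))) ≤
      p w * (-Real.log (mX (X w))) + p w * (-Real.log (mY (Y w))) + p w * Real.log N +
        (p w * (mX (X w) * mY (Y w) / mC (C w)) * (N : ℝ)⁻¹ - p w) := by
    intro w hw
    have h1 : 0 < mC (C w) := fmass_pos s p hp0 C w hw (hp w hw)
    have h2 : 0 < mX (X w) := fmass_pos s p hp0 X w hw (hp w hw)
    have h3 : 0 < mY (Y w) := fmass_pos s p hp0 Y w hw (hp w hw)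
    have hlog := Real.log_le_sub_one_of_pos
      (x := mX (X w) * mY (Y w) / mC (C w) * (N : ℝ)⁻¹) (by positivity)
    rw [Real.log_mul (by positivity) (by positivity), Real.log_div (by positivity) h1.ne',
      Real.log_mul h2.ne' h3.ne', Real.log_inv] at hlog
    have := mul_le_mul_of_nonneg_left hlog (hp0 w)
    linarith
  have hs := Finset.sum_le_sum hterm
  simp only [Finset.sum_add_distrib, Finset.sum_sub_distrib, ← Finset.sum_mul] at hs
  rw [hsum] at hs
  have : (∑ w ∈ s, p w * (mX (X w) * mY (Y w) / mC (C w))) * (N : ℝ)⁻¹ ≤ 1 := by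
    rw [← div_eq_mul_inv, div_le_one hN']
    exact key
  simp only [fent]
  linarith

/-! ### Integer parts -/

theorem floor_close (x y : ℝ) (K : ℕ) (h : |x - y| ≤ K) : |⌊x⌋ - ⌊y⌋| ≤ (K : ℤ) + 1 := by
  have h1 := Int.floor_le x
  have h2 := Int.lt_floor_add_one x
  have h3 := Int.floor_le y
  have h4 := Int.lt_floor_add_one y
  obtain ⟨h5, h6⟩ := abs_le.1 h
  have h7 : ((⌊x⌋ - ⌊y⌋ : ℤ) : ℝ) < ((K + 1 : ℤ) : ℝ) := by push_cast; linarith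
  have h8 : ((-(K + 1) : ℤ) : ℝ) < ((⌊x⌋ - ⌊y⌋ : ℤ) : ℝ) := by push_cast; linarith
  have h9 := Int.cast_lt.1 h7
  have h10 := Int.cast_lt.1 h8
  exact abs_le.2 ⟨by omega, by omega⟩

theorem card_triple_le {α : Type*} [DecidableEq α] (s : Finset α) (C : α → ℤ × ℤ × ℤ) (K : ℕ)
    (h : ∀ w ∈ s, ∀ w' ∈ s, |(C w).1 - (C w').1| ≤ K ∧ |(C w).2.1 - (C w').2.1| ≤ K ∧
      |(C w).2.2 - (C w').2.2| ≤ K) :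
    (s.image C).card ≤ (2 * K + 1) ^ 3 := by
  rcases s.eq_empty_or_nonempty with rfl | ⟨w', hw'⟩
  · simp
  · have hsub : s.image C ⊆ Finset.Icc ((C w').1 - K) ((C w').1 + K) ×ˢ
        (Finset.Icc ((C w').2.1 - K) ((C w').2.1 + K) ×ˢ
          Finset.Icc ((C w').2.2 - K) ((C w').2.2 + K)) := by
      intro c hc
      obtain ⟨w, hw, rfl⟩ := Finset.mem_image.1 hc
      obtain ⟨h1, h2, h3⟩ := h w hw w' hw'
      rw [abs_le] at h1 h2 h3
      simp only [Finset.mem_product, Finset.mem_Icc]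
      omega
    have hcard : ∀ z : ℤ, (Finset.Icc (z - K) (z + K)).card = 2 * K + 1 := by
      intro z
      rw [Int.card_Icc]
      omega
    refine (Finset.card_le_card hsub).trans (le_of_eq ?_)
    rw [Finset.card_product, Finset.card_product, hcard, hcard, hcard]
    ring

theorem mem_badicI (b : ℕ) (hb : 2 ≤ b) (m : ℕ) (j : ℤ) (x : ℝ) :
    x ∈ badicI b m j ↔ ⌊x * (b : ℝ) ^ m⌋ = j := by
  have hB : (0 : ℝ) < (b : ℝ) ^ m := by positivity
  rw [Int.floor_eq_iff, badicI, Set.mem_Ico, div_le_iff₀ hB, lt_div_iff₀ hB]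

/-! ### The projected measures and the cell entropy as entropies of functions -/

theorem Ameas_badicI (b : ℕ) (hb : 2 ≤ b) (γ : ℝ) (φ : ℝ → ℝ) (x₀ : ℝ)
    (s : Finset (List (Fin b))) (p : List (Fin b) → ℝ) (hp : ∀ w, 0 ≤ p w)
    (u : List (Fin b)) (m : ℕ) (j : ℤ) :
    (Ameas b γ φ x₀ s p u (badicI b m j)).toReal =
      fmass s p (fun w => ⌊Sfin b γ φ x₀ (w ++ u) * (b : ℝ) ^ m⌋) j := by
  have hmeas : MeasurableSet (badicI b m j) := measurableSet_Ico
  simp only [Ameas, Measure.coe_finsetSum, Finset.sum_apply, Measure.smul_apply, smul_eq_mul]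
  rw [ENNReal.toReal_sum]
  · refine Finset.sum_congr rfl fun w _ => ?_
    rw [Measure.dirac_apply' _ hmeas]
    by_cases h : Sfin b γ φ x₀ (w ++ u) ∈ badicI b m j
    · have h' := (mem_badicI b hb m j _).1 h
      simp [h, h', ENNReal.toReal_ofReal (hp w)]
    · have h' : ¬ ⌊Sfin b γ φ x₀ (w ++ u) * (b : ℝ) ^ m⌋ = j :=
        fun e => h ((mem_badicI b hb m j _).2 e)
      rw [if_neg h', Set.indicator_of_notMem h, mul_zero, ENNReal.toReal_zero]
  · intro w _
    rw [Measure.dirac_apply' _ hmeas]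
    refine ENNReal.mul_ne_top ENNReal.ofReal_ne_top ?_
    by_cases h : Sfin b γ φ x₀ (w ++ u) ∈ badicI b m j <;> simp [h]

theorem entropy_Ameas (b : ℕ) (hb : 2 ≤ b) (γ : ℝ) (φ : ℝ → ℝ) (x₀ : ℝ)
    (s : Finset (List (Fin b))) (p : List (Fin b) → ℝ) (hp : ∀ w, 0 ≤ p w)
    (u : List (Fin b)) (m : ℕ) :
    entropy b (Ameas b γ φ x₀ s p u) m =
      fent s p (fun w => ⌊Sfin b γ φ x₀ (w ++ u) * (b : ℝ) ^ m⌋) / Real.log b := by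
  set X : List (Fin b) → ℤ := fun w => ⌊Sfin b γ φ x₀ (w ++ u) * (b : ℝ) ^ m⌋ with hX
  unfold entropy
  congr 1
  simp only [Ameas_badicI b hb γ φ x₀ s p hp u m, ← hX]
  rw [tsum_eq_sum (s := s.image X)]
  · have := sum_fmass_mul s p X (fun c => -Real.log (fmass s p X c))
    rw [fent, ← this]
    refine Finset.sum_congr rfl fun c _ => ?_
    rw [Real.negMulLog]
    ring
  · intro c hc
    have : fmass s p X c = 0 := by
      refine Finset.sum_eq_zero fun w hw => if_neg ?_
      rintro rfl
      exact hc (Finset.mem_image_of_mem X hw)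
    rw [this, Real.negMulLog_zero]

/-- The index of the cell of `L_i^{Λ#}` containing a word of length `l`: the three integer parts
which the cell prescribes. -/
def cellIdx (b : ℕ) (γ : ℝ) (φ : ℝ → ℝ) (x₀ : ℝ) (hw h'w : List (Fin b)) (i l : ℕ)
    (w : List (Fin b)) : ℤ × ℤ × ℤ :=
  (⌊Sfin b γ φ (pt b w x₀) hw * (b : ℝ) ^ i⌋, ⌊Sfin b γ φ (pt b w x₀) h'w * (b : ℝ) ^ i⌋,
    ⌊Sfin b γ φ x₀ w * (b : ℝ) ^ (i + ⌊(l : ℝ) * Real.logb b (1 / γ)⌋₊)⌋)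

theorem entCell_eq (b : ℕ) (γ : ℝ) (φ : ℝ → ℝ) (x₀ : ℝ) (hw h'w : List (Fin b)) (i l : ℕ)
    (s : Finset (List (Fin b))) (p : List (Fin b) → ℝ) (hlen : ∀ w, p w ≠ 0 → w.length = l) :
    entCell b γ φ x₀ hw h'w i s p =
      fent s p (cellIdx b γ φ x₀ hw h'w i l) / Real.log b := by
  rw [entCell, fent, Finset.sum_div]
  refine Finset.sum_congr rfl fun w _ => ?_
  by_cases h0 : p w = 0
  · simp [h0]
  have hl := hlen w h0
  have : cellMass b γ φ x₀ hw h'w i s p w =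
      fmass s p (cellIdx b γ φ x₀ hw h'w i l) (cellIdx b γ φ x₀ hw h'w i l w) := by
    refine Finset.sum_congr rfl fun v _ => ?_
    by_cases hv : p v = 0
    · simp [hv]
    have hl' := hlen v hv
    have hiff : sameCell b γ φ x₀ hw h'w i w v ↔
        cellIdx b γ φ x₀ hw h'w i l v = cellIdx b γ φ x₀ hw h'w i l w := by
      simp only [sameCell, sameBadic, cellIdx, hl, hl', true_and, Prod.mk.injEq]
      constructor
      · rintro ⟨h1, h2, h3⟩
        exact ⟨h1.symm, h2.symm, h3.symm⟩
      · rintro ⟨h1, h2, h3⟩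
        exact ⟨h1.symm, h2.symm, h3.symm⟩
    simp only [hiff]
  rw [this, Real.logb]
  ring

/-- Words of zero weight do not affect the entropy. -/
theorem fent_filter {α β : Type*} [DecidableEq β] (s : Finset α) (p : α → ℝ) (f : α → β) :
    fent (s.filter fun w => p w ≠ 0) p f = fent s p f := by
  have hm : ∀ c, fmass (s.filter fun w => p w ≠ 0) p f c = fmass s p f c := by
    intro c
    refine Finset.sum_subset (Finset.filter_subset _ _) fun w hw h => ?_
    have : p w = 0 := by
      by_contra h0
      exact h (Finset.mem_filter.2 ⟨hw, h0⟩)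
    simp [this]
  simp only [fent, hm]
  refine Finset.sum_subset (Finset.filter_subset _ _) fun w hw h => ?_
  have : p w = 0 := by
    by_contra h0
    exact h (Finset.mem_filter.2 ⟨hw, h0⟩)
  simp [this]

/-! ### The functions `S(·, w)` -/

theorem lval_append (b : ℕ) (w v : List (Fin b)) :
    lval b (w ++ v) = lval b w + b ^ w.length * lval b v := by
  induction w with
  | nil => simp [lval]
  | cons a w ih =>
    simp only [List.cons_append, lval, ih, List.length_cons, pow_succ]
    ring

/-- The cocycle identity `S(x, wu) = S(x, w) + γ^{|w|} S(w(x), u)`. -/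
theorem Sfin_append (b : ℕ) (hb : 2 ≤ b) (γ : ℝ) (φ : ℝ → ℝ) (x : ℝ) (w u : List (Fin b)) :
    Sfin b γ φ x (w ++ u) = Sfin b γ φ x w + γ ^ w.length * Sfin b γ φ (pt b w x) u := by
  have hb0 : (b : ℝ) ≠ 0 := by positivity
  simp only [Sfin, List.length_append]
  rw [Finset.sum_range_add, Finset.mul_sum]
  congr 1
  · refine Finset.sum_congr rfl fun n hn => ?_
    rw [List.take_append_of_le_length (Finset.mem_range.1 hn)]
  · refine Finset.sum_congr rfl fun n _ => ?_
    have : (w ++ u).take (w.length + n + 1) = w ++ u.take (n + 1) := by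
      rw [add_assoc, List.take_length_add_append]
    rw [this, lval_append, pow_add, mul_assoc]
    congr 3
    simp only [pt]
    push_cast
    field_simp
    ring

theorem phi_lip (φ : ℝ → ℝ) (hper : ∀ x : ℝ, φ (x + 1) = φ x)
    (hanal : ∀ x : ℝ, AnalyticAt ℝ φ x) :
    ∃ M : ℝ, 0 ≤ M ∧ ∀ x y, |φ x - φ y| ≤ M * |x - y| := by
  have hcont : Continuous (deriv φ) :=
    continuous_iff_continuousAt.2 fun x => (hanal x).deriv.continuousAt
  have hdper : Function.Periodic (deriv φ) 1 := by
    intro x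
    rw [← deriv_comp_add_const]
    congr 1
    exact funext hper
  obtain ⟨M, hM⟩ := isCompact_Icc.exists_bound_of_continuousOn (s := Icc (0 : ℝ) 1)
    hcont.continuousOn
  have hM' : ∀ x, ‖deriv φ x‖ ≤ M := by
    intro x
    have h := hdper.sub_int_mul_eq (x := x) ⌊x⌋
    rw [← h]
    apply hM
    rw [mul_one]
    exact ⟨Int.fract_nonneg x, (Int.fract_lt_one x).le⟩
  refine ⟨M, (norm_nonneg _).trans (hM' 0), fun x y => ?_⟩
  exact convex_univ.norm_image_sub_le_of_norm_deriv_le (fun z _ => (hanal z).differentiableAt)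
    (fun z _ => hM' z) (mem_univ y) (mem_univ x)

theorem Sfin_lip (b : ℕ) (hb : 2 ≤ b) (γ : ℝ) (hγ : γ ∈ Ioo (0 : ℝ) 1) (φ : ℝ → ℝ) (M : ℝ)
    (hM0 : 0 ≤ M) (hM : ∀ x y, |φ x - φ y| ≤ M * |x - y|) (w : List (Fin b)) (x y : ℝ) :
    |Sfin b γ φ x w - Sfin b γ φ y w| ≤ M / (1 - γ) * |x - y| := by
  obtain ⟨h0, h1⟩ := hγ
  have hb1 : (1 : ℝ) ≤ b := by exact_mod_cast (by omega : 1 ≤ b)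
  rw [Sfin, Sfin, ← Finset.sum_sub_distrib]
  calc _ ≤ ∑ n ∈ Finset.range w.length,
          |γ ^ n * φ ((x + lval b (w.take (n + 1))) / (b : ℝ) ^ (n + 1))
            - γ ^ n * φ ((y + lval b (w.take (n + 1))) / (b : ℝ) ^ (n + 1))| :=
        Finset.abs_sum_le_sum_abs _ _
    _ ≤ ∑ n ∈ Finset.range w.length, γ ^ n * (M * |x - y|) := by
        refine Finset.sum_le_sum fun n _ => ?_
        rw [← mul_sub, abs_mul, abs_of_pos (pow_pos h0 n)]
        refine mul_le_mul_of_nonneg_left ((hM _ _).trans ?_) (pow_pos h0 n).le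
        refine mul_le_mul_of_nonneg_left ?_ hM0
        rw [← sub_div, add_sub_add_right_eq_sub, abs_div,
          abs_of_pos (by positivity : (0 : ℝ) < (b : ℝ) ^ (n + 1))]
        exact div_le_self (abs_nonneg _) (one_le_pow₀ hb1)
    _ = (∑ n ∈ Finset.range w.length, γ ^ n) * (M * |x - y|) := by rw [Finset.sum_mul]
    _ ≤ (1 - γ)⁻¹ * (M * |x - y|) := by
        refine mul_le_mul_of_nonneg_right ?_ (by positivity)
        rw [← tsum_geometric_of_lt_one h0.le h1]
        exact (summable_geometric_of_lt_one h0.le h1).sum_le_tsum _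
          (fun n _ => (pow_pos h0 n).le)
    _ = _ := by ring

theorem Sfin_differentiable (b : ℕ) (γ : ℝ) (φ : ℝ → ℝ) (hφ : Differentiable ℝ φ)
    (w : List (Fin b)) : Differentiable ℝ (fun y => Sfin b γ φ y w) := by
  unfold Sfin
  fun_prop

/-- A function whose derivative exceeds `Δ` in absolute value on a convex set expands distances
there by at least `Δ`. -/
theorem expand_of_deriv (D : ℝ → ℝ) (hD : Differentiable ℝ D) (I : Set ℝ) (hI : I.OrdConnected)
    (Δ : ℝ) (hd : ∀ z ∈ I, Δ < |deriv D z|) (x y : ℝ) (hx : x ∈ I) (hy : y ∈ I) :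
    Δ * |x - y| ≤ |D x - D y| := by
  wlog hxy : y ≤ x generalizing x y
  · rw [abs_sub_comm x, abs_sub_comm (D x)]
    exact this y x hy hx (le_of_not_ge hxy)
  rcases hxy.eq_or_lt with rfl | hlt
  · simp
  obtain ⟨c, hc, he⟩ := exists_deriv_eq_slope D hlt hD.continuous.continuousOn
    hD.differentiableOn
  have hcI : c ∈ I := hI.out hy hx ⟨hc.1.le, hc.2.le⟩
  have h := hd c hcI
  have : D x - D y = deriv D c * (x - y) := by
    rw [he]
    field_simp [(sub_pos.2 hlt).ne']
  rw [this, abs_mul]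
  exact mul_le_mul_of_nonneg_right h.le (abs_nonneg _)

theorem pt_mem_Iword (b : ℕ) (hb : 2 ≤ b) (w : List (Fin b)) (x : ℝ) (hx : x ∈ Ico (0 : ℝ) 1) :
    pt b w x ∈ Iword b w := by
  have hB : (0 : ℝ) < (b : ℝ) ^ w.length := by positivity
  simp only [Iword, pt, Set.mem_Ico]
  rw [inv_eq_one_div, ← add_div]
  constructor
  · gcongr
    exact hx.1
  · exact div_lt_div_of_pos_right (by linarith [hx.2]) hB

/-! ### Joint cells of the two projections -/

/-- The metric heart of the argument. Here `y = w(x₀)`, `f = S(x₀, w)`, `g = γ ^ n̂`, `B` is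
`b^{i+k}`, `Bn` is `b^n` and `R` is `b^{⌊n̂ log_b(1/γ)⌋}`: closeness of the two projections at
scale `B * Bn` forces closeness of `y` at scale `B` and of `f` at scale `B * R`. -/
theorem joint_close (F G : ℝ → ℝ) (L Δ γ g B Bn R y y' f f' : ℝ) (hL : 0 ≤ L) (hΔ : 0 < Δ)
    (hγ : 0 < γ) (hg : 0 < g) (hB : 0 < B) (hBn : 0 < Bn) (hgn : Bn⁻¹ < g / γ)
    (hR : 0 < R) (hRg : R * g ≤ 1)
    (hF : |F y - F y'| ≤ L * |y - y'|)
    (hFG : Δ * |y - y'| ≤ |(F y - G y) - (F y' - G y')|)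
    (hX : |(f + g * F y) * (B * Bn) - (f' + g * F y') * (B * Bn)| ≤ 1)
    (hY : |(f + g * G y) * (B * Bn) - (f' + g * G y') * (B * Bn)| ≤ 1) :
    |y - y'| * B ≤ 2 / (γ * Δ) ∧ |f - f'| * (B * R) ≤ 1 / γ + L * (2 / (γ * Δ)) := by
  have hX' : |(f - f') + g * (F y - F y')| * B ≤ g / γ := by
    have : (f + g * F y) * (B * Bn) - (f' + g * F y') * (B * Bn) =
      ((f - f') + g * (F y - F y')) * (B * Bn) := by ring
    rw [this, abs_mul, abs_of_pos (mul_pos hB hBn), ← mul_assoc, ← le_div_iff₀ hBn,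
      one_div] at hX
    linarith
  have hY' : |(f - f') + g * (G y - G y')| * B ≤ g / γ := by
    have : (f + g * G y) * (B * Bn) - (f' + g * G y') * (B * Bn) =
      ((f - f') + g * (G y - G y')) * (B * Bn) := by ring
    rw [this, abs_mul, abs_of_pos (mul_pos hB hBn), ← mul_assoc, ← le_div_iff₀ hBn,
      one_div] at hY
    linarith
  have h1 : g * |(F y - G y) - (F y' - G y')| ≤
      |(f - f') + g * (F y - F y')| + |(f - f') + g * (G y - G y')| := by
    have : g * |(F y - G y) - (F y' - G y')| =
        |((f - f') + g * (F y - F y')) - ((f - f') + g * (G y - G y'))| := by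
      rw [← abs_of_pos hg, ← abs_mul, abs_of_pos hg]
      congr 1
      ring
    rw [this]
    exact abs_sub _ _
  have h2 : g * (Δ * |y - y'|) * B ≤ 2 * (g / γ) := by
    have := mul_le_mul_of_nonneg_left hFG hg.le
    have := mul_le_mul_of_nonneg_right (this.trans h1) hB.le
    linarith
  have hy : |y - y'| * B ≤ 2 / (γ * Δ) := by
    rw [le_div_iff₀ (mul_pos hγ hΔ)]
    have e : g * (|y - y'| * B * (γ * Δ)) ≤ g * 2 := by
      have := mul_le_mul_of_nonneg_right h2 hγ.le
      have e2 : 2 * (g / γ) * γ = g * 2 := by field_simp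
      linarith
    exact le_of_mul_le_mul_left e hg
  refine ⟨hy, ?_⟩
  have h3 : |f - f'| ≤ |(f - f') + g * (F y - F y')| + g * |F y - F y'| := by
    have h := abs_sub ((f - f') + g * (F y - F y')) (g * (F y - F y'))
    rwa [add_sub_cancel_right, abs_mul g, abs_of_pos hg] at h
  have h4 : |f - f'| * B ≤ g * (1 / γ + L * (2 / (γ * Δ))) := by
    have e1 := mul_le_mul_of_nonneg_right h3 hB.le
    have e2 : |F y - F y'| * B ≤ L * (2 / (γ * Δ)) :=
      calc _ ≤ L * |y - y'| * B := by gcongr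
        _ = L * (|y - y'| * B) := by ring
        _ ≤ _ := by gcongr
    have e3 := mul_le_mul_of_nonneg_left e2 hg.le
    have e4 : g / γ = g * (1 / γ) := by ring
    linarith
  have hK : 0 ≤ 1 / γ + L * (2 / (γ * Δ)) := by positivity
  calc |f - f'| * (B * R) = |f - f'| * B * R := by ring
    _ ≤ g * (1 / γ + L * (2 / (γ * Δ))) * R := by gcongr
    _ = R * g * (1 / γ + L * (2 / (γ * Δ))) := by ring
    _ ≤ 1 * (1 / γ + L * (2 / (γ * Δ))) := by gcongr
    _ = _ := one_mul _

theorem pow_floor_mul_le (b : ℕ) (hb : 2 ≤ b) (γ : ℝ) (hγ : γ ∈ Ioo (0 : ℝ) 1) (l : ℕ) :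
    (b : ℝ) ^ ⌊(l : ℝ) * Real.logb b (1 / γ)⌋₊ * γ ^ l ≤ 1 := by
  obtain ⟨h0, h1⟩ := hγ
  have hb1 : (1 : ℝ) < b := by exact_mod_cast (by omega : 1 < b)
  have hlog : 0 ≤ Real.logb b (1 / γ) :=
    Real.logb_nonneg hb1 (by rw [le_div_iff₀ h0]; linarith)
  have hfl := Nat.floor_le (mul_nonneg (Nat.cast_nonneg l) hlog)
  have h2 : (b : ℝ) ^ ⌊(l : ℝ) * Real.logb b (1 / γ)⌋₊ ≤ (1 / γ) ^ l := by
    rw [← Real.rpow_natCast]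
    refine (Real.rpow_le_rpow_of_exponent_le hb1.le hfl).trans (le_of_eq ?_)
    rw [mul_comm, Real.rpow_mul (by positivity), Real.rpow_logb (by positivity) hb1.ne'
      (by positivity), Real.rpow_natCast]
  calc _ ≤ (1 / γ) ^ l * γ ^ l := by gcongr
    _ = 1 := by rw [← mul_pow, one_div, inv_mul_cancel₀ h0.ne', one_pow]

/-- Entropy of `ξ` with respect to `L_{i+k}^{Λ#}` is bounded by the sum of the entropies
of `A_{h'q}(ξ)` and `A_{hq}(ξ)` at scale `i+k+n`, up to an additive constant `L₁`. -/
theorem entropy_le_sum_projections (b : ℕ) (hb : 2 ≤ b) (γ : ℝ) (hγ : γ ∈ Ioo (0 : ℝ) 1)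
    (φ : ℝ → ℝ) (hper : ∀ x : ℝ, φ (x + 1) = φ x) (hanal : ∀ x : ℝ, AnalyticAt ℝ φ x)
    (hat : ℕ → ℕ)
    (hhat : ∀ n : ℕ, 1 ≤ n →
      γ ^ hat n ≤ ((b : ℝ) ^ n)⁻¹ ∧ ((b : ℝ) ^ n)⁻¹ < γ ^ (hat n - 1))
    (t : ℕ) (ht : 0 < t) (Δ₁ : ℝ) (hΔ₁ : 0 < Δ₁) (x₀ : ℝ) (hx₀ : x₀ ∈ Ico (0 : ℝ) 1)
    (aw hw h'w : List (Fin b)) (haw : aw.length = t) (hhw : hw.length = t)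
    (hh'w : h'w.length = t)
    (htrans : ∀ z ∈ Iword b aw, ∀ i j : List (Fin b), hw <+: i → h'w <+: j →
      Δ₁ < |deriv (fun y => Sfin b γ φ y i) z| ∧
      Δ₁ < |deriv (fun y => Sfin b γ φ y j) z| ∧
      Δ₁ < |deriv (fun y => Sfin b γ φ y i) z - deriv (fun y => Sfin b γ φ y j) z|) :
    ∃ L₁ : ℝ, 0 < L₁ ∧
      ∀ n k i : ℕ, 0 < n → 0 < k → 0 < i → ∀ q : List (Fin b), q ≠ [] →
        ∀ (s : Finset (List (Fin b))) (p : List (Fin b) → ℝ),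
          (∀ w, 0 ≤ p w) → (∀ w, p w ≠ 0 → w ∈ s) → (∑ w ∈ s, p w) = 1 →
          (∀ w, p w ≠ 0 → w.length = hat n ∧ Iword b w ⊆ Iword b aw) →
          (∀ w w', p w ≠ 0 → p w' ≠ 0 → sameCell b γ φ x₀ hw h'w i w w') →
          entCell b γ φ x₀ hw h'w (i + k) s p ≤
            entropy b (Ameas b γ φ x₀ s p (h'w ++ q)) (i + k + n) +
              entropy b (Ameas b γ φ x₀ s p (hw ++ q)) (i + k + n) + L₁ := by
  obtain ⟨M, hM0, hM⟩ := phi_lip φ hper hanal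
  have hφ : Differentiable ℝ φ := fun x => (hanal x).differentiableAt
  have hγ0 : 0 < γ := hγ.1
  have hb1 : (1 : ℝ) < b := by exact_mod_cast (by omega : 1 < b)
  have hlogb : 0 < Real.log b := Real.log_pos hb1
  set L : ℝ := M / (1 - γ) with hL
  have hL0 : 0 ≤ L := div_nonneg hM0 (by linarith [hγ.2])
  set K : ℕ := ⌈1 / γ + L * (2 / (γ * Δ₁))⌉₊ with hK
  have hKle : 1 / γ + L * (2 / (γ * Δ₁)) ≤ K := Nat.le_ceil _
  set N : ℕ := (2 * (K + 1) + 1) ^ 3 with hN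
  have hN1 : 1 < N := Nat.one_lt_pow (by norm_num) (by omega)
  refine ⟨Real.log N / Real.log b, div_pos (Real.log_pos (by exact_mod_cast hN1)) hlogb, ?_⟩
  intro n k i hn _ _ q _ s p hp hps hsum hlen _
  obtain ⟨hn1, hn2⟩ := hhat n hn
  -- `hat n` is positive since `γ ^ hat n ≤ b^{-n} < 1`, so the subtraction `hat n - 1` is genuine.
  have hpos : hat n ≠ 0 := by
    intro h
    rw [h, pow_zero] at hn1
    have := inv_lt_one_of_one_lt₀ (one_lt_pow₀ hb1 hn.ne')
    linarith
  have hgn : ((b : ℝ) ^ n)⁻¹ < γ ^ hat n / γ := by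
    rwa [← pow_sub_one_mul hpos γ, mul_div_assoc, div_self hγ0.ne', mul_one]
  set X : List (Fin b) → ℤ := fun w => ⌊Sfin b γ φ x₀ (w ++ (hw ++ q)) * (b : ℝ) ^ (i + k + n)⌋
    with hX
  set Y : List (Fin b) → ℤ := fun w => ⌊Sfin b γ φ x₀ (w ++ (h'w ++ q)) * (b : ℝ) ^ (i + k + n)⌋
    with hY
  set C := cellIdx b γ φ x₀ hw h'w (i + k) (hat n) with hC
  rw [entropy_Ameas b hb γ φ x₀ s p hp, entropy_Ameas b hb γ φ x₀ s p hp,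
    entCell_eq b γ φ x₀ hw h'w (i + k) (hat n) s p (fun w h => (hlen w h).1), ← add_div, ← add_div]
  refine div_le_div_of_nonneg_right ?_ hlogb.le
  rw [← hX, ← hY, ← hC, add_comm (fent s p Y), ← fent_filter s p X, ← fent_filter s p Y,
    ← fent_filter s p C]
  set s' := s.filter fun w => p w ≠ 0 with hs'
  have hs'0 : ∀ w ∈ s', p w ≠ 0 := fun w h => (Finset.mem_filter.1 h).2
  refine entropy_le_of_count s' p (fun w h => lt_of_le_of_ne (hp w) (hs'0 w h).symm) hp
    (by rw [hs', Finset.sum_filter_ne_zero, hsum]) X Y C N (by omega) ?_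
  intro x y
  refine card_triple_le _ C (K + 1) ?_
  intro w hw1 w' hw1'
  obtain ⟨hws, hwx, hwy⟩ := Finset.mem_filter.1 hw1
  obtain ⟨hws', hwx', hwy'⟩ := Finset.mem_filter.1 hw1'
  obtain ⟨hl, hI⟩ := hlen w (hs'0 w hws)
  obtain ⟨hl', hI'⟩ := hlen w' (hs'0 w' hws')
  have hXX := (Int.abs_sub_lt_one_of_floor_eq_floor (hwx.trans hwx'.symm)).le
  have hYY := (Int.abs_sub_lt_one_of_floor_eq_floor (hwy.trans hwy'.symm)).le
  rw [Sfin_append b hb, Sfin_append b hb γ φ x₀ w', hl, hl', pow_add (b : ℝ) (i + k)] at hXX hYY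
  have hdF := Sfin_differentiable b γ φ hφ (hw ++ q)
  have hdG := Sfin_differentiable b γ φ hφ (h'w ++ q)
  have hexp := expand_of_deriv (fun y => Sfin b γ φ y (hw ++ q) - Sfin b γ φ y (h'w ++ q))
    (hdF.sub hdG) (Iword b aw) ordConnected_Ico Δ₁
    (fun z hz => by
      rw [deriv_fun_sub (hdF z) (hdG z)]
      exact (htrans z hz _ _ (List.prefix_append hw q) (List.prefix_append h'w q)).2.2)
    (pt b w x₀) (pt b w' x₀) (hI (pt_mem_Iword b hb w x₀ hx₀))
    (hI' (pt_mem_Iword b hb w' x₀ hx₀))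
  have hB : (0 : ℝ) < (b : ℝ) ^ (i + k) := by positivity
  obtain ⟨hy1, hf1⟩ := joint_close (fun y => Sfin b γ φ y (hw ++ q))
    (fun y => Sfin b γ φ y (h'w ++ q)) L Δ₁ γ (γ ^ hat n) ((b : ℝ) ^ (i + k)) ((b : ℝ) ^ n)
    ((b : ℝ) ^ ⌊(hat n : ℝ) * Real.logb b (1 / γ)⌋₊) (pt b w x₀) (pt b w' x₀)
    (Sfin b γ φ x₀ w) (Sfin b γ φ x₀ w') hL0 hΔ₁ hγ0 (by positivity) hB (by positivity) hgn
    (by positivity) (pow_floor_mul_le b hb γ hγ _) (Sfin_lip b hb γ hγ φ M hM0 hM _ _ _)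
    hexp hXX hYY
  have hSy : ∀ u : List (Fin b), |Sfin b γ φ (pt b w x₀) u * (b : ℝ) ^ (i + k) -
      Sfin b γ φ (pt b w' x₀) u * (b : ℝ) ^ (i + k)| ≤ K := by
    intro u
    rw [← sub_mul, abs_mul, abs_of_pos hB]
    calc _ ≤ L * |pt b w x₀ - pt b w' x₀| * (b : ℝ) ^ (i + k) := by
          gcongr
          exact Sfin_lip b hb γ hγ φ M hM0 hM _ _ _
      _ = L * (|pt b w x₀ - pt b w' x₀| * (b : ℝ) ^ (i + k)) := by ring
      _ ≤ L * (2 / (γ * Δ₁)) := by gcongr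
      _ ≤ 1 / γ + L * (2 / (γ * Δ₁)) := le_add_of_nonneg_left (by positivity)
      _ ≤ K := hKle
  have hSf : |Sfin b γ φ x₀ w * (b : ℝ) ^ (i + k + ⌊(hat n : ℝ) * Real.logb b (1 / γ)⌋₊) -
      Sfin b γ φ x₀ w' * (b : ℝ) ^ (i + k + ⌊(hat n : ℝ) * Real.logb b (1 / γ)⌋₊)| ≤ K := by
    rw [← sub_mul, abs_mul, abs_of_pos (by positivity :
      (0 : ℝ) < (b : ℝ) ^ (i + k + ⌊(hat n : ℝ) * Real.logb b (1 / γ)⌋₊)), pow_add (b : ℝ) (i + k)]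
    exact hf1.trans hKle
  have h1 := floor_close _ _ K (hSy hw)
  have h2 := floor_close _ _ K (hSy h'w)
  have h3 := floor_close _ _ K hSf
  push_cast
  exact ⟨h1, h2, h3⟩

end
end Skew
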